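/- Let A and B be symmetric real n×n matrices with B positive definite, and let λ ≥ 0 be a real number. Then haf [[λA, B], [B, A]] = per B holds if and only if A is a diagonal matrix or λ = 0. -/

import Mathlib

open Matrix BigOperators

/-- The hafnian of an `n × n` real matrix: for `n = 2m` it is
`(1/(m! 2^m)) Σ_π C_{π(1),π(2)} ⋯ C_{π(2m-1),π(2m)}`, and it is `0` for odd `n`. -/
noncomputable def haf {n : ℕ} (C : Matrix (Fin n) (Fin n) ℝ) : ℝ :=
  if Even n then
    (1 / ((n / 2).factorial * 2 ^ (n / 2)) : ℝ) *
      ∑ π : Equiv.Perm (Fin n),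
        ∏ i : Fin (n / 2), C (π ⟨2 * i.val, by omega⟩) (π ⟨2 * i.val + 1, by omega⟩)
  else 0

/-- The permanent of an `n × n` real matrix. -/
noncomputable def per {n : ℕ} (M : Matrix (Fin n) (Fin n) ℝ) : ℝ :=
  ∑ π : Equiv.Perm (Fin n), ∏ i, M i (π i)

/-- The equivalence used to view a block `2n × 2n` matrix (indexed by `Fin n ⊕ Fin n`)
as a matrix indexed by `Fin (2 * n)`. -/
def blockIndex (n : ℕ) : (Fin n ⊕ Fin n) ≃ Fin (2 * n) :=
  finSumFinEquiv.trans (finCongr (by omega))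

/-!
Up to the factor `n! * 2 ^ n`, the hafnian of a `2n × 2n` matrix is the coefficient of the product
of all `2n` variables in the `n`-th power of its quadratic form. For the block matrix with blocks
`l • A`, `B`, `B`, `A` this form is `2 β(x, y) + l α(x) + α(y)`, where `β` and `α` are the forms
of `B` and `A`. Expand its `n`-th power: the coefficient of `∏ i, x i * y i` in
`β ^ c * α(x) ^ a * α(y) ^ b` is the value of the `c`-th Kronecker power of `B` on two vectors of
coefficients of `α ^ a` and `α ^ b`. By degree it vanishes unless `a = b`, and then it is
nonnegative, because the Kronecker powers of `B` are positive definite. The term `a = b = 0`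
contributes `n! * 2 ^ n * per B`, so the hafnian is at least the permanent. If they are equal and
`0 < l`, the term `a = b = 1` vanishes, and positive definiteness kills its vector of
coefficients, which lists the entries `A i j + A j i` with `i ≠ j`. Conversely, the hafnian does
not see the diagonal, and when `l • A` is replaced by `0` only the term `a = b = 0` is left.
-/

open MvPolynomial
open Finset.HasAntidiagonal (antidiagonal)
open scoped Kronecker

lemma sum_filter_bijective {ι κ M : Type*} [Fintype ι] [Fintype κ] [DecidableEq ι]
    [DecidableEq κ] [DecidablePred (Function.Bijective (α := κ) (β := ι))] [AddCommMonoid M]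
    (F : (κ → ι) → M) : ∑ g with g.Bijective, F g = ∑ e : κ ≃ ι, F e := by
  symm
  refine Finset.sum_bij (fun e _ => ⇑e) (fun e _ => by simp)
    (fun _ _ _ _ h => DFunLike.coe_injective h)
    (fun g hg => ⟨Equiv.ofBijective g (by simpa using hg), by simp, rfl⟩) fun _ _ => rfl

section KroneckerPower

variable {ι κ R : Type*}

/-- The `c`-th Kronecker power of a matrix, with rows and columns indexed by words of length `c`. -/
def kroneckerPow [CommMonoid R] (M : Matrix ι κ R) (c : ℕ) : Matrix (Fin c → ι) (Fin c → κ) R :=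
  of fun f g => ∏ s, M (f s) (g s)

lemma kroneckerPow_succ [CommSemiring R] (M : Matrix ι κ R) (c : ℕ) :
    kroneckerPow M (c + 1) = (M ⊗ₖ kroneckerPow M c).submatrix
      (Fin.consEquiv fun _ => ι).symm (Fin.consEquiv fun _ => κ).symm := by
  ext f g
  exact Fin.prod_univ_succ _

lemma posDef_kroneckerPow [Finite ι] {B : Matrix ι ι ℝ} (hB : B.PosDef) (c : ℕ) :
    (kroneckerPow B c).PosDef := by
  induction c with
  | zero =>
    classical
    have hone : kroneckerPow B 0 = 1 := by
      ext f g
      rw [Subsingleton.elim f g, one_apply_eq]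
      exact Fin.prod_univ_zero fun s => B (g s) (g s)
    exact hone ▸ .one
  | succ c ih =>
    rw [kroneckerPow_succ]
    exact (hB.kronecker ih).submatrix (Equiv.injective _)

lemma dotProduct_map_mulVec_pow {S : Type*} [Fintype ι] [Fintype κ] [CommSemiring R]
    [CommSemiring S] (φ : R →+* S) (x : ι → S) (M : Matrix ι κ R) (y : κ → S) (c : ℕ) :
    (x ⬝ᵥ M.map φ *ᵥ y) ^ c =
      ∑ f, ∑ g, φ (kroneckerPow M c f g) * ((∏ s, x (f s)) * ∏ s, y (g s)) := by
  simp only [dotProduct, mulVec, map_apply, kroneckerPow, of_apply, map_prod,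
    ← Finset.prod_mul_distrib]
  rw [Fintype.sum_pow]
  refine Finset.sum_congr rfl fun f _ => ?_
  rw [Finset.prod_mul_distrib, Finset.prod_univ_sum, Finset.mul_sum]
  simp only [← Finset.prod_mul_distrib, Fintype.piFinset_univ]
  refine Finset.sum_congr rfl fun g _ => Finset.prod_congr rfl fun s _ => ?_
  ring

end KroneckerPower

section MultilinearCoeff

variable {ι κ R : Type*} [Fintype ι] [Fintype κ] [CommSemiring R]

/-- The coefficient of the squarefree monomial `∏ i, X i` in a polynomial. -/
noncomputable def multilinearCoeff : MvPolynomial ι R →ₗ[R] R :=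
  lcoeff R (Finsupp.equivFunOnFinite.symm 1)

lemma multilinearCoeff_C_mul (r : R) (p : MvPolynomial ι R) :
    multilinearCoeff (C r * p) = r * multilinearCoeff p :=
  coeff_C_mul _ _ _

lemma multilinearCoeff_prod_X (g : κ → ι) [Decidable g.Bijective] :
    multilinearCoeff (∏ k, X (R := R) (g k)) = if g.Bijective then 1 else 0 := by
  classical
  have hmonomial : ∏ k, X (R := R) (g k) = monomial (∑ k, Finsupp.single (g k) 1) 1 :=
    (monomial_sum_one _ _).symm
  have hbij : ∑ k, Finsupp.single (g k) 1 = Finsupp.equivFunOnFinite.symm (1 : ι → ℕ) ↔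
      g.Bijective := by
    rw [Function.bijective_iff_existsUnique, Finsupp.ext_iff]
    simp [Finsupp.finsetSum_apply, Finsupp.single_apply, Finset.card_eq_one,
      ExistsUnique, Finset.eq_singleton_iff_unique_mem]
  rw [hmonomial, multilinearCoeff, lcoeff_apply, coeff_monomial]
  exact if_congr hbij rfl rfl

lemma multilinearCoeff_prod_compl_mul [DecidableEq ι] (s : Finset ι) (p : MvPolynomial ι R) :
    multilinearCoeff ((∏ k ∈ sᶜ, X k) * p) = coeff (∑ k ∈ s, Finsupp.single k 1) p := by
  have hones : Finsupp.equivFunOnFinite.symm (1 : ι → ℕ) =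
      ∑ k ∈ sᶜ, Finsupp.single k 1 + ∑ k ∈ s, Finsupp.single k 1 := by
    rw [Finset.sum_compl_add_sum]
    ext k
    simp [Finsupp.finsetSum_apply, Finsupp.single_apply]
  have hprod : ∏ k ∈ sᶜ, X (R := R) k = monomial (∑ k ∈ sᶜ, Finsupp.single k 1) 1 :=
    (monomial_sum_one _ _).symm
  rw [multilinearCoeff, lcoeff_apply, hones, hprod, coeff_monomial_mul, one_mul]

lemma multilinearCoeff_rename_mul_rename (p : MvPolynomial ι R) (q : MvPolynomial κ R) :
    multilinearCoeff (rename Sum.inl p * rename Sum.inr q) =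
      multilinearCoeff p * multilinearCoeff q := by
  classical
  induction p using MvPolynomial.induction_on' with
  | add p₁ p₂ h₁ h₂ => simp only [map_add, add_mul, h₁, h₂]
  | monomial a r =>
    induction q using MvPolynomial.induction_on' with
    | add q₁ q₂ h₁ h₂ => simp only [map_add, mul_add, h₁, h₂]
    | monomial b s =>
      have hsplit : Finsupp.sumElim a b = Finsupp.equivFunOnFinite.symm 1 ↔
          a = Finsupp.equivFunOnFinite.symm 1 ∧ b = Finsupp.equivFunOnFinite.symm 1 := by
        simp [Finsupp.ext_iff]
      simp only [rename_monomial, monomial_mul, ← Finsupp.sumElim_eq_add, multilinearCoeff,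
        lcoeff_apply, coeff_monomial, hsplit, ite_and]
      split_ifs <;> simp

lemma multilinearCoeff_eq_zero_of_isHomogeneous {p : MvPolynomial ι R} {d : ℕ}
    (hp : p.IsHomogeneous d) (hd : d ≠ Fintype.card ι) : multilinearCoeff p = 0 := by
  refine hp.coeff_eq_zero ?_
  simpa [Finsupp.degree_eq_sum] using hd.symm

/-- The vector of coefficients of a polynomial at the complements of the words `f` of length `c`:
the entry at an injective `f` is the coefficient at `∏ i ∉ range f, X i`, and multiplying by the
word makes the entry vanish for every other `f`. -/
noncomputable def complementaryCoeff (c : ℕ) : MvPolynomial ι R →ₗ[R] (Fin c → ι) → R :=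
  LinearMap.pi fun f => multilinearCoeff ∘ₗ LinearMap.mulLeft R (∏ s, X (f s))

lemma complementaryCoeff_apply (c : ℕ) (p : MvPolynomial ι R) (f : Fin c → ι) :
    complementaryCoeff c p f = multilinearCoeff ((∏ s, X (f s)) * p) :=
  rfl

lemma complementaryCoeff_eq_zero_of_isHomogeneous {p : MvPolynomial ι R} {c d : ℕ}
    (hp : p.IsHomogeneous d) (hcd : c + d ≠ Fintype.card ι) : complementaryCoeff c p = 0 := by
  funext f
  have hword : (∏ s, X (R := R) (f s)).IsHomogeneous c := by
    simpa using IsHomogeneous.prod Finset.univ _ _ fun s _ => isHomogeneous_X R (f s)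
  exact multilinearCoeff_eq_zero_of_isHomogeneous (hword.mul hp) hcd

end MultilinearCoeff

section QuadraticAndBilinear

variable {ι κ R : Type*} [Fintype ι] [Fintype κ] [CommSemiring R]

/-- The quadratic form `∑ i j, A i j * X i * X j` of a square matrix, as a polynomial. -/
noncomputable def quadraticPoly (A : Matrix ι ι R) : MvPolynomial ι R :=
  X ⬝ᵥ A.map C *ᵥ X

/-- The bilinear form `∑ i j, B i j * x i * y j` of a matrix, as a polynomial in the variables
`x i = X (inl i)` and `y j = X (inr j)`. -/
noncomputable def bilinearPoly (B : Matrix ι κ R) : MvPolynomial (ι ⊕ κ) R :=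
  (X ∘ Sum.inl) ⬝ᵥ B.map C *ᵥ (X ∘ Sum.inr)

lemma isHomogeneous_quadraticPoly (A : Matrix ι ι R) : (quadraticPoly A).IsHomogeneous 2 :=
  .sum _ _ _ fun i _ => (isHomogeneous_X R i).mul <|
    .sum _ _ _ fun j _ => (isHomogeneous_X R j).C_mul (A i j)

lemma rename_quadraticPoly {σ : Type*} (g : ι → σ) (A : Matrix ι ι R) :
    rename g (quadraticPoly A) = (X ∘ g) ⬝ᵥ A.map C *ᵥ (X ∘ g) := by
  simp [quadraticPoly, dotProduct, mulVec]

lemma quadraticPoly_smul (l : R) (A : Matrix ι ι R) :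
    quadraticPoly (l • A) = l • quadraticPoly A := by
  simp [quadraticPoly, dotProduct, mulVec, smul_eq_C_mul, Finset.mul_sum, mul_assoc,
    mul_left_comm]

lemma quadraticPoly_fromBlocks (A : Matrix ι ι R) (B : Matrix ι κ R) (D : Matrix κ κ R) :
    quadraticPoly (fromBlocks A B Bᵀ D) =
      2 * bilinearPoly B +
        (rename Sum.inl (quadraticPoly A) + rename Sum.inr (quadraticPoly D)) := by
  have htranspose : (X ∘ Sum.inr) ⬝ᵥ Bᵀ.map C *ᵥ (X ∘ Sum.inl) = bilinearPoly B := by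
    rw [transpose_map, dotProduct_transpose_mulVec, bilinearPoly]
  rw [quadraticPoly, fromBlocks_map, fromBlocks_mulVec, dotProduct_block]
  simp only [Sum.elim_comp_inl, Sum.elim_comp_inr, dotProduct_add, htranspose]
  rw [rename_quadraticPoly, rename_quadraticPoly, bilinearPoly]
  ring

lemma coeff_single_add_single_quadraticPoly (A : Matrix ι ι R) {i j : ι} (hij : i ≠ j) :
    coeff (Finsupp.single i 1 + Finsupp.single j 1) (quadraticPoly A) = A i j + A j i := by
  classical
  have hterm (p : ι × ι) : coeff (Finsupp.single i 1 + Finsupp.single j 1)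
      (X p.1 * (C (A p.1 p.2) * X p.2)) =
      if p ∈ ({(i, j), (j, i)} : Finset (ι × ι)) then A p.1 p.2 else 0 := by
    rw [mul_left_comm, coeff_C_mul, X, X, monomial_mul, one_mul, coeff_monomial,
      mul_ite, mul_one, mul_zero]
    refine if_congr ?_ rfl rfl
    rw [Finsupp.single_add_single_eq_single_add_single one_ne_zero one_ne_zero]
    simp [Prod.ext_iff]
  have hpair : (i, j) ≠ (j, i) := fun h => hij (congrArg Prod.fst h)
  simp only [quadraticPoly, dotProduct, mulVec, map_apply, Finset.mul_sum]
  rw [← Fintype.sum_prod_type', coeff_sum, Finset.sum_congr rfl fun p _ => hterm p,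
    Finset.sum_ite_mem, Finset.univ_inter, Finset.sum_pair hpair]

lemma add_eq_zero_of_complementaryCoeff_quadraticPoly_eq_zero {A : Matrix ι ι R} {c : ℕ}
    (hcard : Fintype.card ι = c + 2) (hA : complementaryCoeff c (quadraticPoly A) = 0)
    {i j : ι} (hij : i ≠ j) : A i j + A j i = 0 := by
  classical
  have hcompl : ({i, j} : Finset ι)ᶜ.card = c := by
    rw [Finset.card_compl, Finset.card_pair hij, hcard, Nat.add_sub_cancel]
  let word := (Finset.equivFinOfCardEq hcompl).symm
  have hword : ∏ s, X (R := R) (word s : ι) = ∏ k ∈ {i, j}ᶜ, X k := by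
    rw [word.prod_comp fun k => X (k : ι), Finset.prod_coe_sort _ fun k => X k]
  calc A i j + A j i
      = multilinearCoeff ((∏ k ∈ {i, j}ᶜ, X k) * quadraticPoly A) := by
        rw [multilinearCoeff_prod_compl_mul, Finset.sum_pair hij,
          coeff_single_add_single_quadraticPoly A hij]
    _ = complementaryCoeff c (quadraticPoly A) fun s => word s := by
        rw [← hword, complementaryCoeff_apply]
    _ = 0 := congrFun hA _

lemma multilinearCoeff_quadraticPoly_pow [DecidableEq ι] (A : Matrix ι ι R) (m : ℕ) :
    multilinearCoeff (quadraticPoly A ^ m) =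
      ∑ e : Fin m ⊕ Fin m ≃ ι, ∏ s, A (e (Sum.inl s)) (e (Sum.inr s)) := by
  classical
  have hword (f g : Fin m → ι) :
      (∏ s, X (f s)) * ∏ s, X (g s) = ∏ k, X (R := R) (Sum.elim f g k) := by
    simp [Fintype.prod_sum_type]
  calc multilinearCoeff (quadraticPoly A ^ m)
      = ∑ f : Fin m → ι, ∑ g : Fin m → ι,
          if (Sum.elim f g).Bijective then ∏ s, A (f s) (g s) else 0 := by
        simp only [quadraticPoly, dotProduct_map_mulVec_pow, map_sum, multilinearCoeff_C_mul, hword,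
          multilinearCoeff_prod_X, mul_ite, mul_one, mul_zero]
        rfl
    _ = ∑ h : Fin m ⊕ Fin m → ι with h.Bijective, ∏ s, A (h (Sum.inl s)) (h (Sum.inr s)) := by
        rw [Finset.sum_filter, ← (Equiv.sumArrowEquivProdArrow _ _ ι).symm.sum_comp,
          Fintype.sum_prod_type]
        rfl
    _ = _ := sum_filter_bijective _

/-- The bilinear pairing of `p` and `q` given by the Kronecker power `kroneckerPow B c` on their
complementary coefficients. It is the coefficient of `∏ i, x i * ∏ j, y j` in
`bilinearPoly B ^ c * p(x) * q(y)`, and is positive semidefinite when `B` is positive definite. -/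
noncomputable def coeffPairing (B : Matrix ι κ R) (c : ℕ)
    (p : MvPolynomial ι R) (q : MvPolynomial κ R) : R :=
  complementaryCoeff c p ⬝ᵥ kroneckerPow B c *ᵥ complementaryCoeff c q

lemma multilinearCoeff_bilinearPoly_pow_mul (B : Matrix ι κ R) (c : ℕ)
    (p : MvPolynomial ι R) (q : MvPolynomial κ R) :
    multilinearCoeff (bilinearPoly B ^ c * (rename Sum.inl p * rename Sum.inr q)) =
      coeffPairing B c p q := by
  have hsplit (f : Fin c → ι) (g : Fin c → κ) :
      multilinearCoeff ((∏ s, X (Sum.inl (f s))) * (∏ s, X (Sum.inr (g s))) *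
        (rename Sum.inl p * rename Sum.inr q)) =
      complementaryCoeff c p f * complementaryCoeff c q g := by
    rw [mul_mul_mul_comm, complementaryCoeff_apply, complementaryCoeff_apply,
      ← multilinearCoeff_rename_mul_rename]
    simp only [map_mul, map_prod, rename_X]
  rw [bilinearPoly, dotProduct_map_mulVec_pow]
  simp only [Function.comp_apply, Finset.sum_mul, mul_assoc, map_sum, multilinearCoeff_C_mul,
    coeffPairing, dotProduct, mulVec, Finset.mul_sum]
  refine Finset.sum_congr rfl fun f _ => Finset.sum_congr rfl fun g _ => ?_
  rw [← mul_assoc (∏ s, _), hsplit, mul_left_comm]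

lemma multilinearCoeff_quadraticPoly_fromBlocks_pow
    (A : Matrix ι ι R) (B : Matrix ι κ R) (D : Matrix κ κ R) (n : ℕ) :
    multilinearCoeff (quadraticPoly (fromBlocks A B Bᵀ D) ^ n) =
      ∑ x ∈ antidiagonal n, ∑ y ∈ antidiagonal x.2,
        (n.choose x.1 * x.2.choose y.1 * 2 ^ x.1 : ℕ) *
          coeffPairing B x.1 (quadraticPoly A ^ y.1) (quadraticPoly D ^ y.2) := by
  rw [quadraticPoly_fromBlocks, (Commute.all _ _).add_pow', map_sum]
  refine Finset.sum_congr rfl fun x _ => ?_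
  rw [(Commute.all _ _).add_pow', Finset.mul_sum, Finset.smul_sum, map_sum]
  refine Finset.sum_congr rfl fun y _ => ?_
  rw [← multilinearCoeff_bilinearPoly_pow_mul, ← nsmul_eq_mul, ← map_nsmul]
  simp only [nsmul_eq_mul, map_pow]
  push_cast
  ring_nf

end QuadraticAndBilinear

section Pairing

variable {ι κ R : Type*} [Fintype ι] [Fintype κ]

lemma coeffPairing_eq_zero_of_isHomogeneous_left [CommSemiring R] (B : Matrix ι κ R) {c d : ℕ}
    {p : MvPolynomial ι R} (hp : p.IsHomogeneous d) (hcd : c + d ≠ Fintype.card ι)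
    (q : MvPolynomial κ R) : coeffPairing B c p q = 0 := by
  rw [coeffPairing, complementaryCoeff_eq_zero_of_isHomogeneous hp hcd, zero_dotProduct]

lemma coeffPairing_smul_left [CommSemiring R] (B : Matrix ι κ R) (c : ℕ) (r : R)
    (p : MvPolynomial ι R) (q : MvPolynomial κ R) :
    coeffPairing B c (r • p) q = r * coeffPairing B c p q := by
  rw [coeffPairing, map_smul, smul_dotProduct, smul_eq_mul, coeffPairing]

lemma coeffPairing_self_nonneg {B : Matrix ι ι ℝ} (hB : B.PosDef) (c : ℕ)
    (p : MvPolynomial ι ℝ) : 0 ≤ coeffPairing B c p p := by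
  simpa [coeffPairing] using (posDef_kroneckerPow hB c).posSemidef.dotProduct_mulVec_nonneg
    (complementaryCoeff c p)

lemma coeffPairing_self_eq_zero {B : Matrix ι ι ℝ} (hB : B.PosDef) {c : ℕ}
    {p : MvPolynomial ι ℝ} : coeffPairing B c p p = 0 ↔ complementaryCoeff c p = 0 := by
  refine ⟨fun h => ?_, fun h => by rw [coeffPairing, h, zero_dotProduct]⟩
  by_contra hne
  exact ((posDef_kroneckerPow hB c).dotProduct_mulVec_pos hne).ne' (by simpa [coeffPairing] using h)

lemma coeffPairing_quadraticPoly_pow_nonneg {B : Matrix ι ι ℝ} (hB : B.PosDef)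
    (A : Matrix ι ι ℝ) {a b c : ℕ} (habc : c + (a + b) = Fintype.card ι) :
    0 ≤ coeffPairing B c (quadraticPoly A ^ a) (quadraticPoly A ^ b) := by
  rcases eq_or_ne a b with rfl | hab
  · exact coeffPairing_self_nonneg hB _ _
  · rw [coeffPairing_eq_zero_of_isHomogeneous_left B ((isHomogeneous_quadraticPoly A).pow a)
      (by lia)]

lemma le_multilinearCoeff_quadraticPoly_fromBlocks_pow {B : Matrix ι ι ℝ} (hB : B.PosDef)
    (A : Matrix ι ι ℝ) {l : ℝ} (hl : 0 ≤ l) {c : ℕ} (hcard : Fintype.card ι = c + 2) :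
    2 ^ (c + 2) * coeffPairing B (c + 2) 1 1 +
        (c + 2).choose c * 2 ^ (c + 1) * l *
          coeffPairing B c (quadraticPoly A) (quadraticPoly A) ≤
      multilinearCoeff (quadraticPoly (fromBlocks (l • A) B Bᵀ A) ^ (c + 2)) := by
  let term (z : (_ : ℕ × ℕ) × ℕ × ℕ) : ℝ :=
    ((c + 2).choose z.1.1 * z.1.2.choose z.2.1 * 2 ^ z.1.1 : ℕ) *
      coeffPairing B z.1.1 (quadraticPoly (l • A) ^ z.2.1) (quadraticPoly A ^ z.2.2)
  let index := (antidiagonal (c + 2)).sigma fun x => antidiagonal x.2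
  have hterm_nonneg : ∀ z ∈ index, 0 ≤ term z := by
    rintro ⟨⟨k, d⟩, a, b⟩ hz
    obtain ⟨hkd, hab⟩ : k + d = c + 2 ∧ a + b = d := by simpa [index] using hz
    have hpair := coeffPairing_quadraticPoly_pow_nonneg hB A (a := a) (b := b) (c := k) (by lia)
    simp only [term, quadraticPoly_smul, smul_pow, coeffPairing_smul_left]
    positivity
  have hbilinear : term ⟨(c + 2, 0), 0, 0⟩ = 2 ^ (c + 2) * coeffPairing B (c + 2) 1 1 := by
    simp [term]
  have hquadratic : term ⟨(c, 2), 1, 1⟩ = (c + 2).choose c * 2 ^ (c + 1) * l *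
      coeffPairing B c (quadraticPoly A) (quadraticPoly A) := by
    simp only [term, quadraticPoly_smul, pow_one, coeffPairing_smul_left, Nat.choose_one_right]
    push_cast
    ring
  rw [multilinearCoeff_quadraticPoly_fromBlocks_pow, Finset.sum_sigma', ← hbilinear, ← hquadratic]
  exact Finset.add_le_sum hterm_nonneg (by simp) (by simp) (by simp)

lemma multilinearCoeff_quadraticPoly_fromBlocks_zero_pow [CommSemiring R] (B : Matrix ι κ R)
    (D : Matrix κ κ R) :
    multilinearCoeff (quadraticPoly (fromBlocks 0 B Bᵀ D) ^ Fintype.card ι) =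
      2 ^ Fintype.card ι * coeffPairing B (Fintype.card ι) 1 1 := by
  have hzero : quadraticPoly (0 : Matrix ι ι R) = 0 := by
    simp [quadraticPoly]
  rw [multilinearCoeff_quadraticPoly_fromBlocks_pow, hzero,
    Finset.sum_eq_single_of_mem (Fintype.card ι, 0) (by simp)]
  · simp
  rintro ⟨k, d⟩ hkd hne
  refine Finset.sum_eq_zero fun y _ => ?_
  have hvanish : coeffPairing B k ((0 : MvPolynomial ι R) ^ y.1) (quadraticPoly D ^ y.2) = 0 := by
    rcases eq_or_ne y.1 0 with hy | hy
    · have hk : k + 0 ≠ Fintype.card ι := by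
        rintro rfl
        simp_all
      rw [hy, pow_zero]
      exact coeffPairing_eq_zero_of_isHomogeneous_left B (isHomogeneous_one ι R) hk _
    · rw [zero_pow hy, coeffPairing, map_zero, zero_dotProduct]
  rw [hvanish, mul_zero]

end Pairing

section PerHaf

open scoped Nat

lemma coeffPairing_one_one {n : ℕ} (B : Matrix (Fin n) (Fin n) ℝ) :
    coeffPairing B n 1 1 = n ! * per B := by
  classical
  have hper (e : Equiv.Perm (Fin n)) :
      ∑ e' : Equiv.Perm (Fin n), ∏ s, B (e s) (e' s) = per B := by
    rw [per, ← Equiv.sum_comp (Equiv.mulRight e)]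
    exact Finset.sum_congr rfl fun σ _ => Equiv.prod_comp e fun i => B i (σ i)
  calc coeffPairing B n 1 1
      = ∑ f : Fin n → Fin n with f.Bijective, ∑ g : Fin n → Fin n with g.Bijective,
          ∏ s, B (f s) (g s) := by
        simp only [coeffPairing, complementaryCoeff_apply, mul_one, multilinearCoeff_prod_X,
          dotProduct, mulVec, kroneckerPow, of_apply, mul_ite, mul_zero, ite_mul, one_mul, zero_mul,
          Finset.sum_filter]
    _ = ∑ e : Equiv.Perm (Fin n), ∑ e' : Equiv.Perm (Fin n), ∏ s, B (e s) (e' s) := by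
        simp only [sum_filter_bijective]
    _ = n ! * per B := by
        simp [hper, Fintype.card_perm]

/-- The splitting of `Fin (2 * m)` into the even numbers `2 * s` and the odd numbers `2 * s + 1`,
whose pairs of consecutive indices are the factors in the definition of the hafnian. -/
def evenOddEquiv (m : ℕ) : Fin m ⊕ Fin m ≃ Fin (2 * m) :=
  (((Equiv.boolProdEquivSum (Fin m)).symm.trans (Equiv.prodComm _ _)).trans
    (Equiv.prodCongr (Equiv.refl _) finTwoEquiv.symm)).trans
    (finProdFinEquiv.trans (finCongr (mul_comm m 2)))

lemma evenOddEquiv_inl {m : ℕ} (s : Fin m) : (evenOddEquiv m (Sum.inl s) : ℕ) = 2 * s := by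
  simp [evenOddEquiv, finTwoEquiv]

lemma evenOddEquiv_inr {m : ℕ} (s : Fin m) : (evenOddEquiv m (Sum.inr s) : ℕ) = 2 * s + 1 := by
  simp [evenOddEquiv, finTwoEquiv, add_comm]

lemma factorial_mul_two_pow_mul_haf {m : ℕ} (D : Matrix (Fin (2 * m)) (Fin (2 * m)) ℝ) :
    m ! * 2 ^ m * haf D = ∑ π : Equiv.Perm (Fin (2 * m)),
      ∏ s, D (π (evenOddEquiv m (Sum.inl s))) (π (evenOddEquiv m (Sum.inr s))) := by
  have hhalf : 2 * m / 2 = m := Nat.mul_div_cancel_left m two_pos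
  have hprod (π : Equiv.Perm (Fin (2 * m))) :
      ∏ s : Fin (2 * m / 2), D (π ⟨2 * s.val, by lia⟩) (π ⟨2 * s.val + 1, by lia⟩) =
        ∏ s, D (π (evenOddEquiv m (Sum.inl s))) (π (evenOddEquiv m (Sum.inr s))) := by
    refine Fintype.prod_equiv (finCongr hhalf) _ _ fun s => ?_
    congr 2 <;> ext <;> simp [evenOddEquiv_inl, evenOddEquiv_inr]
  have hne : (m ! * 2 ^ m : ℝ) ≠ 0 := by positivity
  rw [haf, if_pos (even_two_mul m)]
  simp only [hprod]
  rw [hhalf, one_div, mul_inv_cancel_left₀ hne]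

lemma factorial_mul_two_pow_mul_haf_submatrix {ι : Type*} [Fintype ι] {m : ℕ}
    (D : Matrix ι ι ℝ) (e : ι ≃ Fin (2 * m)) :
    m ! * 2 ^ m * haf (D.submatrix e.symm e.symm) = multilinearCoeff (quadraticPoly D ^ m) := by
  classical
  rw [factorial_mul_two_pow_mul_haf, multilinearCoeff_quadraticPoly_pow,
    ← Equiv.sum_comp (Equiv.equivCongr (evenOddEquiv m).symm e.symm)]
  rfl

lemma haf_congr_offDiag {n : ℕ} {D E : Matrix (Fin n) (Fin n) ℝ}
    (h : ∀ i j, i ≠ j → D i j = E i j) : haf D = haf E := by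
  rw [haf, haf, Finset.sum_congr rfl fun π _ => Finset.prod_congr rfl fun s _ =>
    h _ _ (π.injective.ne (by simp))]

lemma haf_fromBlocks_zero {n : ℕ} (A B : Matrix (Fin n) (Fin n) ℝ) :
    haf ((fromBlocks 0 B Bᵀ A).submatrix (blockIndex n).symm (blockIndex n).symm) = per B := by
  have hscaled := factorial_mul_two_pow_mul_haf_submatrix (fromBlocks 0 B Bᵀ A) (blockIndex n)
  have hcoeff := multilinearCoeff_quadraticPoly_fromBlocks_zero_pow B A
  rw [Fintype.card_fin, coeffPairing_one_one] at hcoeff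
  have hne : (n ! * 2 ^ n : ℝ) ≠ 0 := by positivity
  refine mul_left_cancel₀ hne ?_
  rw [hscaled, hcoeff]
  ring

lemma add_eq_zero_of_haf_fromBlocks_le_per {n : ℕ} {A B : Matrix (Fin n) (Fin n) ℝ}
    (hB : B.PosDef) {l : ℝ} (hl : 0 < l)
    (hle : haf ((fromBlocks (l • A) B Bᵀ A).submatrix
      (blockIndex n).symm (blockIndex n).symm) ≤ per B)
    {i j : Fin n} (hij : i ≠ j) : A i j + A j i = 0 := by
  obtain ⟨c, rfl⟩ : ∃ c, n = c + 2 := ⟨n - 2, by lia⟩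
  have hbound := le_multilinearCoeff_quadraticPoly_fromBlocks_pow hB A hl.le (Fintype.card_fin _)
  rw [← factorial_mul_two_pow_mul_haf_submatrix _ (blockIndex (c + 2)), coeffPairing_one_one]
    at hbound
  have hcoeff : (0 : ℝ) < (c + 2).choose c * 2 ^ (c + 1) * l := by
    have hchoose := Nat.choose_pos (Nat.le_add_right c 2)
    positivity
  have hscaled_le := mul_le_mul_of_nonneg_left hle
    (by positivity : (0 : ℝ) ≤ (c + 2)! * 2 ^ (c + 2))
  have hpair : coeffPairing B c (quadraticPoly A) (quadraticPoly A) = 0 :=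
    (nonpos_of_mul_nonpos_right (by linarith) hcoeff).antisymm (coeffPairing_self_nonneg hB c _)
  exact add_eq_zero_of_complementaryCoeff_quadraticPoly_eq_zero (Fintype.card_fin _)
    ((coeffPairing_self_eq_zero hB).1 hpair) hij

end PerHaf

theorem hafnian_block_eq_per_iff (n : ℕ) (A B : Matrix (Fin n) (Fin n) ℝ)
    (hA : Aᵀ = A) (hBsymm : Bᵀ = B)
    (hBpd : ∀ x : Fin n → ℝ, x ≠ 0 → 0 < x ⬝ᵥ B *ᵥ x)
    (l : ℝ) (hl : 0 ≤ l) :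
    haf ((Matrix.fromBlocks (l • A) B B A).submatrix
        (blockIndex n).symm (blockIndex n).symm) = per B
      ↔ (∀ i j, i ≠ j → A i j = 0) ∨ l = 0 := by
  have hB : B.PosDef := .of_dotProduct_mulVec_pos hBsymm fun x hx => hBpd x hx
  constructor
  · intro h
    refine hl.eq_or_lt.symm.imp (fun hlpos i j hij => ?_) Eq.symm
    have hsum : A i j + A j i = 0 :=
      add_eq_zero_of_haf_fromBlocks_le_per hB hlpos (by rw [hBsymm, h]) hij
    have hsymm : A j i = A i j := congrFun₂ hA i j
    linarith
  · rintro (hdiag | rfl)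
    · have hoffDiag : ∀ a b, a ≠ b → fromBlocks (l • A) B B A a b = fromBlocks 0 B B 0 a b := by
        rintro (a | a) (b | b) hab <;> simp_all
      rw [← haf_fromBlocks_zero 0 B, hBsymm]
      exact haf_congr_offDiag fun i j hij =>
        hoffDiag _ _ ((blockIndex n).symm.injective.ne hij)
    · simpa [hBsymm] using haf_fromBlocks_zero A B
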